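/- In the one-dimensional case with Gaussian prior θ ∼ N(0,s²) and Σ < s², the discretized Langevin chain P_Σ for a Gibbs random field posterior is geometrically ergodic with limiting distribution π_Σ, the noisy Langevin chain P̂_{Σ,N} is geometrically ergodic for all sufficiently large N with limiting distribution π_{Σ,N}, and ||π_Σ − π_{Σ,N}|| → 0 in total variation as N → ∞. -/

import Mathlib

open MeasureTheory ProbabilityTheory Filter

noncomputable def gibbsF1 {Y : Type*} [Fintype Y] (s : Y → ℝ) (θ : ℝ) (y : Y) : ℝ :=
  Real.exp (θ * s y) / ∑ y', Real.exp (θ * s y')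

noncomputable def tvDist {Θ : Type*} [MeasurableSpace Θ] (μ ν : Measure Θ) : ℝ :=
  ⨆ s : Set Θ, |(μ s).toReal - (ν s).toReal|

noncomputable def iterK {Θ : Type*} [MeasurableSpace Θ] (P : Θ → Measure Θ) :
    ℕ → Θ → Measure Θ
  | 0 => fun θ => Measure.dirac θ
  | n + 1 => fun θ => (iterK P n θ).bind P

/-!
The mean of a Langevin step is an affine function of `θ` of slope `1 - σ² / (2 sp²)`, of absolute
value less than one, plus a bounded term. Hence `|θ|` is a Lyapunov function for both the exact and
the noisy kernel, and on any bounded set of starting points the Gaussian densities have a common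
lower bound on `[0, 1]`. By Harris' theorem in the form of Hairer and Mattingly, every kernel with a
given drift and minorization contracts the oscillation of functions, weighted by
`2 + β (|x| + |y|)`, so that the geometric rate and the constants do not depend on the sample
size `N`.

The empirical mean of `N` samples has standard deviation of order `1 / √N` and the total variation
distance of two Gaussians of equal variance is controlled by the distance of their means, so one
step of the two chains differs by `ε = O(1 / √N)`, uniformly in `θ`. Comparing the chains after `n`
steps bounds the distance of the invariant measures by `2 C ρⁿ + n ε`: choose `n`, then `N`.
-/

section TotalVariation

variable {X : Type*} [MeasurableSpace X] {μ ν : Measure X}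

lemma tvDist_nonneg (μ ν : Measure X) : 0 ≤ tvDist μ ν :=
  Real.iSup_nonneg fun _ => abs_nonneg _

lemma tvDist_self (μ : Measure X) : tvDist μ μ = 0 := by
  simp [tvDist]

lemma tvDist_comm (μ ν : Measure X) : tvDist μ ν = tvDist ν μ := by
  simp only [tvDist, abs_sub_comm]

lemma tvDist_le_of_forall_measurableSet {ε : ℝ}
    (h : ∀ A, MeasurableSet A → |μ.real A - ν.real A| ≤ ε) : tvDist μ ν ≤ ε := by
  refine ciSup_le fun s => ?_
  let B := toMeasurable μ s ∩ toMeasurable ν s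
  have hsB : s ⊆ B := Set.subset_inter (subset_toMeasurable μ s) (subset_toMeasurable ν s)
  have hμB : μ B = μ s := le_antisymm
    ((measure_mono Set.inter_subset_left).trans (measure_toMeasurable s).le) (measure_mono hsB)
  have hνB : ν B = ν s := le_antisymm
    ((measure_mono Set.inter_subset_right).trans (measure_toMeasurable s).le) (measure_mono hsB)
  have hB := h B ((measurableSet_toMeasurable μ s).inter (measurableSet_toMeasurable ν s))
  rwa [Measure.real, Measure.real, hμB, hνB] at hB

lemma abs_measureReal_sub_le_tvDist (μ ν : Measure X) [IsProbabilityMeasure μ]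
    [IsProbabilityMeasure ν] (A : Set X) : |μ.real A - ν.real A| ≤ tvDist μ ν := by
  refine le_ciSup (f := fun s : Set X => |μ.real s - ν.real s|) ⟨1, ?_⟩ A
  rintro _ ⟨s, rfl⟩
  exact abs_sub_le_of_nonneg_of_le measureReal_nonneg measureReal_le_one
    measureReal_nonneg measureReal_le_one

lemma eq_of_tvDist_nonpos [IsProbabilityMeasure μ] [IsProbabilityMeasure ν]
    (h : tvDist μ ν ≤ 0) : μ = ν :=
  Measure.ext fun A _ => (measureReal_eq_measureReal_iff).1 <| sub_eq_zero.1 <|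
    abs_nonpos_iff.1 ((abs_measureReal_sub_le_tvDist μ ν A).trans h)

lemma tvDist_triangle (μ ν ξ : Measure X) [IsProbabilityMeasure μ] [IsProbabilityMeasure ν]
    [IsProbabilityMeasure ξ] : tvDist μ ξ ≤ tvDist μ ν + tvDist ν ξ :=
  tvDist_le_of_forall_measurableSet fun A _ => (abs_sub_le _ (ν.real A) _).trans
    (add_le_add (abs_measureReal_sub_le_tvDist μ ν A) (abs_measureReal_sub_le_tvDist ν ξ A))

lemma measureReal_bind {Z : Type*} [MeasurableSpace Z] (μ : Measure X) (κ : Kernel X Z)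
    [IsFiniteKernel κ] {A : Set Z} (hA : MeasurableSet A) :
    (μ.bind κ).real A = ∫ x, (κ x).real A ∂μ := by
  rw [Measure.real, Measure.bind_apply hA κ.aemeasurable]
  exact (integral_toReal (Kernel.measurable_coe κ hA).aemeasurable
    (Eventually.of_forall fun _ => measure_lt_top _ _)).symm

lemma integrable_measureReal_kernel {Z : Type*} [MeasurableSpace Z] (μ : Measure X)
    [IsFiniteMeasure μ] (κ : Kernel X Z) [IsMarkovKernel κ] {A : Set Z} (hA : MeasurableSet A) :
    Integrable (fun x => (κ x).real A) μ :=
  Integrable.of_bound (κ.measurable_coe hA).ennreal_toReal.aestronglyMeasurable 1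
    (Eventually.of_forall fun _ => by
      rw [Real.norm_of_nonneg measureReal_nonneg]; exact measureReal_le_one)

-- Layer cake: both integrals are averages over `t ∈ (0, 1]` of the measure of `{t ≤ f}`.
lemma abs_integral_sub_integral_le_tvDist [IsProbabilityMeasure μ] [IsProbabilityMeasure ν]
    {f : X → ℝ} (hf : Measurable f) (hf0 : ∀ x, 0 ≤ f x) (hf1 : ∀ x, f x ≤ 1) :
    |∫ x, f x ∂μ - ∫ x, f x ∂ν| ≤ tvDist μ ν := by
  have layerCake (ξ : Measure X) [IsProbabilityMeasure ξ] :
      ∫ x, f x ∂ξ = ∫ t in Set.Ioc 0 1, ξ.real {x | t ≤ f x} :=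
    (Integrable.of_bound hf.aestronglyMeasurable 1 (Eventually.of_forall fun x => by
      rw [Real.norm_of_nonneg (hf0 x)]; exact hf1 x)).integral_eq_integral_Ioc_meas_le
      (Eventually.of_forall hf0) (Eventually.of_forall hf1)
  have tail_integrable (ξ : Measure X) [IsProbabilityMeasure ξ] :
      IntegrableOn (fun t => ξ.real {x | t ≤ f x}) (Set.Ioc 0 1) := by
    have anti : Antitone fun t => ξ.real {x | t ≤ f x} := fun t u htu =>
      measureReal_mono fun x (hx : u ≤ f x) => htu.trans hx
    exact ((anti.antitoneOn _).integrableOn_isCompact isCompact_Icc).mono_set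
      Set.Ioc_subset_Icc_self
  rw [layerCake μ, layerCake ν, ← integral_sub (tail_integrable μ) (tail_integrable ν)]
  have h := norm_setIntegral_le_of_norm_le_const (μ := volume)
    (f := fun t => μ.real {x | t ≤ f x} - ν.real {x | t ≤ f x}) measure_Ioc_lt_top
    fun t (_ : t ∈ Set.Ioc (0 : ℝ) 1) => abs_measureReal_sub_le_tvDist μ ν {x | t ≤ f x}
  simpa using h

lemma tvDist_bind_le {Z : Type*} [MeasurableSpace Z] (μ ν : Measure X) [IsProbabilityMeasure μ]
    [IsProbabilityMeasure ν] (κ : Kernel X Z) [IsMarkovKernel κ] :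
    tvDist (μ.bind κ) (ν.bind κ) ≤ tvDist μ ν := by
  refine tvDist_le_of_forall_measurableSet fun A hA => ?_
  rw [measureReal_bind μ κ hA, measureReal_bind ν κ hA]
  exact abs_integral_sub_integral_le_tvDist (κ.measurable_coe hA).ennreal_toReal
    (fun _ => measureReal_nonneg) fun _ => measureReal_le_one

lemma tvDist_bind_bind_le_integral {Z : Type*} [MeasurableSpace Z] (μ : Measure X)
    [IsProbabilityMeasure μ] (κ η : Kernel X Z) [IsMarkovKernel κ] [IsMarkovKernel η] {g : X → ℝ}
    (hg : Integrable g μ) (h : ∀ x, tvDist (κ x) (η x) ≤ g x) :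
    tvDist (μ.bind κ) (μ.bind η) ≤ ∫ x, g x ∂μ := by
  refine tvDist_le_of_forall_measurableSet fun A hA => ?_
  rw [measureReal_bind μ κ hA, measureReal_bind μ η hA,
    ← integral_sub (integrable_measureReal_kernel μ κ hA) (integrable_measureReal_kernel μ η hA)]
  exact norm_integral_le_of_norm_le (f := fun x => (κ x).real A - (η x).real A) hg
    (Eventually.of_forall fun x => (abs_measureReal_sub_le_tvDist (κ x) (η x) A).trans (h x))

-- Uniform convergence lets the limit in `i` be exchanged with the limit of the partial unions.
lemma hasSum_of_tendstoUniformlyOn_measureReal {ι : Type*} {p : Filter ι} [p.NeBot]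
    {μ : ι → Measure X} [∀ i, IsFiniteMeasure (μ i)] {l : Set X → ℝ}
    (h : TendstoUniformlyOn (fun i A => (μ i).real A) l p {A | MeasurableSet A})
    {f : ℕ → Set X} (hf : ∀ k, MeasurableSet (f k)) (hd : Pairwise (Function.onFun Disjoint f)) :
    HasSum (fun k => l (f k)) (l (⋃ k, f k)) := by
  have sum_μ (i : ι) (t : Finset ℕ) : ∑ k ∈ t, (μ i).real (f k) = (μ i).real (⋃ k ∈ t, f k) :=
    (measureReal_biUnion_finset (fun _ _ _ _ hkj => hd hkj) fun k _ => hf k).symm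
  have measurable_union (t : Finset ℕ) : MeasurableSet (⋃ k ∈ t, f k) :=
    t.measurableSet_biUnion fun k _ => hf k
  have sum_l (t : Finset ℕ) : ∑ k ∈ t, l (f k) = l (⋃ k ∈ t, f k) := by
    refine tendsto_nhds_unique (tendsto_finsetSum t fun k _ => h.tendsto_at (hf k)) ?_
    simp_rw [sum_μ]
    exact h.tendsto_at (measurable_union t)
  have partial_tendsto (i : ι) : Tendsto (fun t : Finset ℕ => (μ i).real (⋃ k ∈ t, f k)) atTop
      (nhds ((μ i).real (⋃ k, f k))) := by
    have hasSum_μ : HasSum (fun k => (μ i).real (f k)) ((μ i).real (⋃ k, f k)) := by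
      simpa [Measure.toSignedMeasure_apply_measurable, hf, MeasurableSet.iUnion hf] using
        (μ i).toSignedMeasure.m_iUnion hf hd
    simpa only [HasSum, sum_μ, SummationFilter.unconditional_filter] using hasSum_μ
  have partial_uniform : TendstoUniformly (fun i (t : Finset ℕ) => (μ i).real (⋃ k ∈ t, f k))
      (fun t => l (⋃ k ∈ t, f k)) p := fun u hu =>
    (h u hu).mono fun _ hi t => hi _ (measurable_union t)
  simpa only [HasSum, sum_l, SummationFilter.unconditional_filter] using
    partial_uniform.tendsto_of_eventually_tendsto (Eventually.of_forall partial_tendsto)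
      (h.tendsto_at (MeasurableSet.iUnion hf))

lemma exists_measureReal_eq_of_tendstoUniformlyOn {ι : Type*} {p : Filter ι} [p.NeBot]
    {μ : ι → Measure X} [∀ i, IsProbabilityMeasure (μ i)] {l : Set X → ℝ}
    (h : TendstoUniformlyOn (fun i A => (μ i).real A) l p {A | MeasurableSet A}) :
    ∃ π : Measure X, IsProbabilityMeasure π ∧ ∀ A, MeasurableSet A → π.real A = l A := by
  have l_nonneg {A : Set X} (hA : MeasurableSet A) : 0 ≤ l A :=
    ge_of_tendsto' (h.tendsto_at hA) fun _ => measureReal_nonneg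
  have l_empty : l ∅ = 0 := tendsto_nhds_unique (h.tendsto_at .empty) (by simp)
  have l_univ : l Set.univ = 1 := tendsto_nhds_unique (h.tendsto_at .univ) (by simp)
  let π : Measure X := Measure.ofMeasurable (fun A _ => ENNReal.ofReal (l A)) (by simp [l_empty])
    fun f hf hd => by
      have hasSum_l := hasSum_of_tendstoUniformlyOn_measureReal h hf hd
      rw [← hasSum_l.tsum_eq,
        ENNReal.ofReal_tsum_of_nonneg (fun k => l_nonneg (hf k)) hasSum_l.summable]
  have π_apply {A : Set X} (hA : MeasurableSet A) : π A = ENNReal.ofReal (l A) :=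
    Measure.ofMeasurable_apply A hA
  refine ⟨π, ⟨by simp [π_apply .univ, l_univ]⟩, fun A hA => ?_⟩
  rw [Measure.real, π_apply hA, ENNReal.toReal_ofReal (l_nonneg hA)]

lemma exists_tvDist_le_of_le_geometric {μ : ℕ → Measure X} [∀ n, IsProbabilityMeasure (μ n)]
    {C r : ℝ} (hr0 : 0 ≤ r) (hr1 : r < 1) (h : ∀ n, tvDist (μ n) (μ (n + 1)) ≤ C * r ^ n) :
    ∃ π : Measure X, IsProbabilityMeasure π ∧ ∀ n, tvDist (μ n) π ≤ C * r ^ n / (1 - r) := by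
  have dist_le (A : Set X) (n : ℕ) : dist ((μ n).real A) ((μ (n + 1)).real A) ≤ C * r ^ n :=
    (abs_measureReal_sub_le_tvDist _ _ A).trans (h n)
  choose l hl using fun A =>
    cauchySeq_tendsto_of_complete (cauchySeq_of_le_geometric r C hr1 (dist_le A))
  have dist_l_le (A : Set X) (n : ℕ) : dist ((μ n).real A) (l A) ≤ C * r ^ n / (1 - r) :=
    dist_le_of_le_geometric_of_tendsto r C hr1 (dist_le A) (hl A) n
  have bound_tendsto : Tendsto (fun n => C * r ^ n / (1 - r)) atTop (nhds 0) := by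
    simpa using ((tendsto_pow_atTop_nhds_zero_of_lt_one hr0 hr1).const_mul C).div_const (1 - r)
  have unif : TendstoUniformlyOn (fun n A => (μ n).real A) l atTop {A | MeasurableSet A} :=
    Metric.tendstoUniformlyOn_iff.2 fun ε hε => (bound_tendsto.eventually_lt_const hε).mono
      fun n hn A _ => by rw [dist_comm]; exact (dist_l_le A n).trans_lt hn
  obtain ⟨π, hπ, hπl⟩ := exists_measureReal_eq_of_tendstoUniformlyOn unif
  refine ⟨π, hπ, fun n => tvDist_le_of_forall_measurableSet fun A hA => ?_⟩
  rw [hπl A hA]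
  exact dist_l_le A n

end TotalVariation

section Iterates

variable {X : Type*} [MeasurableSpace X]

instance isMarkovKernel_pow (κ : Kernel X X) [IsMarkovKernel κ] (n : ℕ) :
    IsMarkovKernel (κ ^ n) := by
  induction n with
  | zero => exact inferInstanceAs (IsMarkovKernel Kernel.id)
  | succ n _ => rw [pow_succ']; exact inferInstanceAs (IsMarkovKernel (κ ∘ₖ (κ ^ n)))

lemma pow_zero_kernel_apply (κ : Kernel X X) (x : X) : (κ ^ 0) x = Measure.dirac x :=
  Kernel.id_apply x

lemma pow_succ_kernel_apply (κ : Kernel X X) (n : ℕ) (x : X) :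
    (κ ^ (n + 1)) x = ((κ ^ n) x).bind κ := by
  rw [pow_succ']
  exact Kernel.comp_apply κ (κ ^ n) x

lemma pow_succ_kernel_apply' (κ : Kernel X X) (n : ℕ) (x : X) :
    (κ ^ (n + 1)) x = (κ x).bind (κ ^ n) := by
  rw [pow_succ]
  exact Kernel.comp_apply (κ ^ n) κ x

lemma iterK_eq_pow (κ : Kernel X X) (n : ℕ) (x : X) : iterK κ n x = (κ ^ n) x := by
  induction n with
  | zero => exact (pow_zero_kernel_apply κ x).symm
  | succ n ih => rw [pow_succ_kernel_apply, ← ih, iterK]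

lemma tvDist_pow_le {κ η : Kernel X X} [IsMarkovKernel κ] [IsMarkovKernel η] {ε : ℝ}
    (h : ∀ x, tvDist (κ x) (η x) ≤ ε) (n : ℕ) (x : X) :
    tvDist ((κ ^ n) x) ((η ^ n) x) ≤ n * ε := by
  induction n with
  | zero => simp [tvDist_self]
  | succ n ih =>
    rw [pow_succ_kernel_apply, pow_succ_kernel_apply]
    calc tvDist (((κ ^ n) x).bind κ) (((η ^ n) x).bind η)
        ≤ tvDist (((κ ^ n) x).bind κ) (((η ^ n) x).bind κ)
          + tvDist (((η ^ n) x).bind κ) (((η ^ n) x).bind η) := tvDist_triangle _ _ _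
      _ ≤ n * ε + ε := by
          refine add_le_add ((tvDist_bind_le _ _ κ).trans ih) ?_
          simpa using tvDist_bind_bind_le_integral ((η ^ n) x) κ η (integrable_const ε) h
      _ = (n + 1 : ℕ) * ε := by push_cast; ring

lemma invariant_of_tendsto_tvDist_pow {κ : Kernel X X} [IsMarkovKernel κ] {π : Measure X}
    [IsProbabilityMeasure π] {x : X}
    (h : Tendsto (fun n => tvDist ((κ ^ n) x) π) atTop (nhds 0)) : κ.Invariant π := by
  have bound (n : ℕ) :
      tvDist (π.bind κ) π ≤ tvDist ((κ ^ n) x) π + tvDist ((κ ^ (n + 1)) x) π := by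
    refine (tvDist_triangle _ ((κ ^ (n + 1)) x) _).trans (add_le_add_left ?_ _)
    rw [pow_succ_kernel_apply, tvDist_comm _ π]
    exact tvDist_bind_le π ((κ ^ n) x) κ
  have bound_tendsto := h.add (h.comp (tendsto_add_atTop_nat 1))
  rw [add_zero] at bound_tendsto
  exact eq_of_tvDist_nonpos (ge_of_tendsto' bound_tendsto bound)

/-- `κ` has the invariant probability measure `π`, and the law of the chain started at `x` converges
to `π` in total variation at the geometric rate `ρ`, with constant `C x`. The rate and the constant
are parameters so that a whole family of kernels can share them. -/
structure IsGeometricallyErgodic (κ : Kernel X X) (π : Measure X) (ρ : ℝ) (C : X → ℝ) : Prop where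
  isProbabilityMeasure : IsProbabilityMeasure π
  invariant : κ.Invariant π
  tvDist_le : ∀ x n, tvDist ((κ ^ n) x) π ≤ C x * ρ ^ n

lemma IsGeometricallyErgodic.tvDist_iterK_le {κ : Kernel X X} {π : Measure X} {ρ : ℝ} {C : X → ℝ}
    (h : IsGeometricallyErgodic κ π ρ C) (x : X) (n : ℕ) :
    tvDist (iterK κ n x) π ≤ C x * ρ ^ n :=
  (iterK_eq_pow κ n x).symm ▸ h.tvDist_le x n

lemma IsGeometricallyErgodic.tvDist_le_of_tvDist_le {κ η : Kernel X X} [IsMarkovKernel κ]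
    [IsMarkovKernel η] {π π' : Measure X} {ρ ε : ℝ} {C : X → ℝ}
    (hκ : IsGeometricallyErgodic κ π ρ C) (hη : IsGeometricallyErgodic η π' ρ C)
    (h : ∀ x, tvDist (κ x) (η x) ≤ ε) (n : ℕ) (x : X) :
    tvDist π π' ≤ 2 * (C x * ρ ^ n) + n * ε := by
  have := hκ.isProbabilityMeasure
  have := hη.isProbabilityMeasure
  calc tvDist π π'
      ≤ tvDist π ((κ ^ n) x) + (tvDist ((κ ^ n) x) ((η ^ n) x) + tvDist ((η ^ n) x) π') :=
        (tvDist_triangle _ _ _).trans (add_le_add_right (tvDist_triangle _ _ _) _)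
    _ ≤ C x * ρ ^ n + (n * ε + C x * ρ ^ n) := by
        rw [tvDist_comm π]
        exact add_le_add (hκ.tvDist_le x n) (add_le_add (tvDist_pow_le h n x) (hη.tvDist_le x n))
    _ = 2 * (C x * ρ ^ n) + n * ε := by ring

lemma IsGeometricallyErgodic.tendsto_tvDist {ι : Type*} {l : Filter ι}
    {κ : Kernel X X} {η : ι → Kernel X X} [IsMarkovKernel κ] [∀ i, IsMarkovKernel (η i)]
    {π : Measure X} {π' : ι → Measure X} {ρ : ℝ} {C : X → ℝ} (hρ0 : 0 ≤ ρ) (hρ1 : ρ < 1)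
    (hκ : IsGeometricallyErgodic κ π ρ C) (hη : ∀ᶠ i in l, IsGeometricallyErgodic (η i) (π' i) ρ C)
    {ε : ι → ℝ} (h : ∀ᶠ i in l, ∀ x, tvDist (κ x) (η i x) ≤ ε i) (hε : Tendsto ε l (nhds 0)) :
    Tendsto (fun i => tvDist π (π' i)) l (nhds 0) := by
  have := hκ.isProbabilityMeasure
  obtain ⟨x⟩ := π.nonempty_of_neZero
  refine tendsto_order.2 ⟨fun a ha => .of_forall fun i => ha.trans_le (tvDist_nonneg _ _),
    fun δ hδ => ?_⟩
  have geometric_tendsto : Tendsto (fun n => 2 * (C x * ρ ^ n)) atTop (nhds 0) := by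
    simpa using ((tendsto_pow_atTop_nhds_zero_of_lt_one hρ0 hρ1).const_mul (C x)).const_mul 2
  obtain ⟨n, hn⟩ := (geometric_tendsto.eventually_lt_const hδ).exists
  have bound_tendsto : Tendsto (fun i => 2 * (C x * ρ ^ n) + n * ε i) l
      (nhds (2 * (C x * ρ ^ n))) := by
    simpa using (hε.const_mul (n : ℝ)).const_add (2 * (C x * ρ ^ n))
  filter_upwards [bound_tendsto.eventually_lt_const hn, hη, h] with i hi hηi hεi
  exact (hκ.tvDist_le_of_tvDist_le hηi hεi n x).trans_lt hi

end Iterates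

section Harris

/-- `φ` is `c`-Lipschitz for the distance `d x y = 2 + β (V x + V y)`, `x ≠ y`, of Hairer and
Mattingly. -/
def HasWeightedOscLE {X : Type*} (V : X → ℝ) (β c : ℝ) (φ : X → ℝ) : Prop :=
  ∀ x y, |φ x - φ y| ≤ c * (2 + β * (V x + V y))

lemma HasWeightedOscLE.exists_abs_sub_le {X : Type*} {V φ : X → ℝ} {β c : ℝ}
    (h : HasWeightedOscLE V β c φ) : ∃ k, ∀ x, |φ x - k| ≤ c * (1 + β * V x) := by
  have lower_le_upper (x y : X) : φ x - c * (1 + β * V x) ≤ φ y + c * (1 + β * V y) := by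
    linarith [(abs_le.1 (h x y)).2]
  refine ⟨⨆ x, (φ x - c * (1 + β * V x)), fun x => ?_⟩
  have : Nonempty X := ⟨x⟩
  have le_center := le_ciSup (f := fun x => φ x - c * (1 + β * V x))
    ⟨_, Set.forall_mem_range.2 (lower_le_upper · x)⟩ x
  have center_le := ciSup_le (lower_le_upper · x)
  exact abs_sub_le_iff.2 ⟨by linarith, by linarith⟩

variable {X : Type*} [MeasurableSpace X]

/-- The Foster–Lyapunov drift inequality `κ V ≤ a V + b`, together with the minorization of `κ x` by
the measure `ν` (a nonzero multiple of the usual small-set measure) on the sublevel set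
`{V ≤ R}`. -/
structure HarrisCondition (κ : Kernel X X) (V : X → ℝ) (ν : Measure X) (a b R : ℝ) : Prop where
  lyapunov_nonneg : ∀ x, 0 ≤ V x
  integrable : ∀ x, Integrable V (κ x)
  drift : ∀ x, ∫ z, V z ∂κ x ≤ a * V x + b
  minorization : ∀ x, V x ≤ R → ν ≤ κ x

-- The mass `ν` common to `μ₁` and `μ₂` cancels in the difference of the integrals.
lemma integral_sub_integral_le_of_le {μ₁ μ₂ ν : Measure X} [IsProbabilityMeasure μ₁]
    [IsProbabilityMeasure μ₂] (h₁ : ν ≤ μ₁) (h₂ : ν ≤ μ₂) {φ U : X → ℝ} {k : ℝ}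
    (hφ : Measurable φ) (hφU : ∀ x, |φ x - k| ≤ U x) (hU₁ : Integrable U μ₁)
    (hU₂ : Integrable U μ₂) :
    ∫ x, φ x ∂μ₁ - ∫ x, φ x ∂μ₂ ≤ ∫ x, U x ∂μ₁ + ∫ x, U x ∂μ₂ - 2 * ∫ x, U x ∂ν := by
  have hφ₁ : Integrable (fun x => φ x - k) μ₁ :=
    hU₁.mono' (hφ.sub_const k).aestronglyMeasurable (.of_forall hφU)
  have hφ₂ : Integrable (fun x => φ x - k) μ₂ :=
    hU₂.mono' (hφ.sub_const k).aestronglyMeasurable (.of_forall hφU)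
  have integral_centered {μ : Measure X} [IsProbabilityMeasure μ]
      (hμ : Integrable (fun x => φ x - k) μ) : ∫ x, φ x ∂μ = ∫ x, (φ x - k) ∂μ + k := by
    have hφμ : Integrable φ μ :=
      (hμ.add (integrable_const k)).congr (.of_forall fun x => sub_add_cancel (φ x) k)
    rw [integral_sub hφμ (integrable_const k)]
    simp
  have upper := integral_mono_measure h₁
    (.of_forall fun x => show 0 ≤ U x - (φ x - k) by linarith [(abs_le.1 (hφU x)).2])
    (hU₁.sub hφ₁)
  have lower := integral_mono_measure h₂
    (.of_forall fun x => show 0 ≤ U x + (φ x - k) by linarith [(abs_le.1 (hφU x)).1])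
    (hU₂.add hφ₂)
  rw [integral_sub hU₁ hφ₁, integral_sub (hU₁.mono_measure h₁) (hφ₁.mono_measure h₁)] at upper
  rw [integral_add hU₂ hφ₂, integral_add (hU₂.mono_measure h₂) (hφ₂.mono_measure h₂)] at lower
  rw [integral_centered hφ₁, integral_centered hφ₂]
  linarith

lemma abs_integral_sub_integral_le_of_le {μ₁ μ₂ ν : Measure X} [IsProbabilityMeasure μ₁]
    [IsProbabilityMeasure μ₂] (h₁ : ν ≤ μ₁) (h₂ : ν ≤ μ₂) {φ U : X → ℝ} {k : ℝ}
    (hφ : Measurable φ) (hφU : ∀ x, |φ x - k| ≤ U x) (hU₁ : Integrable U μ₁)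
    (hU₂ : Integrable U μ₂) :
    |∫ x, φ x ∂μ₁ - ∫ x, φ x ∂μ₂| ≤ ∫ x, U x ∂μ₁ + ∫ x, U x ∂μ₂ - 2 * ∫ x, U x ∂ν :=
  abs_sub_le_iff.2 ⟨integral_sub_integral_le_of_le h₁ h₂ hφ hφU hU₁ hU₂,
    (integral_sub_integral_le_of_le h₂ h₁ hφ hφU hU₂ hU₁).trans_eq (by ring)⟩

-- If `V x + V y` is large the drift alone contracts; otherwise both points lie in `{V ≤ R}` and the
-- common mass `ν` does.
lemma HarrisCondition.hasWeightedOscLE_integral {κ : Kernel X X} [IsMarkovKernel κ] {V : X → ℝ}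
    {ν : Measure X} [IsFiniteMeasure ν] {a b R β γ c : ℝ} (hκ : HarrisCondition κ V ν a b R)
    (hβ : 0 ≤ β) (haγ : a ≤ γ) (hfar : 2 * (1 - γ) + 2 * β * b ≤ (γ - a) * β * R)
    (hnear : 1 - ν.real Set.univ + β * b ≤ γ) (hc : 0 ≤ c) {φ : X → ℝ} (hφm : Measurable φ)
    (hφ : HasWeightedOscLE V β c φ) :
    HasWeightedOscLE V β (c * γ) fun x => ∫ z, φ z ∂κ x := by
  intro x y
  obtain ⟨k, hk⟩ := hφ.exists_abs_sub_le
  have hV (μ : Measure X) [IsFiniteMeasure μ] (hμ : Integrable V μ) :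
      ∫ z, c * (1 + β * V z) ∂μ = c * (μ.real Set.univ + β * ∫ z, V z ∂μ) := by
    rw [integral_const_mul, integral_add (integrable_const 1) (hμ.const_mul β),
      integral_const_mul]
    simp
  have bound {η : Measure X} (hx : η ≤ κ x) (hy : η ≤ κ y) :=
    abs_integral_sub_integral_le_of_le hx hy hφm hk
      (((integrable_const 1).add ((hκ.integrable x).const_mul β)).const_mul c)
      (((integrable_const 1).add ((hκ.integrable y).const_mul β)).const_mul c)
  simp only [hV (κ x) (hκ.integrable x), hV (κ y) (hκ.integrable y), probReal_univ] at bound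
  have drift_sum : β * (∫ z, V z ∂κ x + ∫ z, V z ∂κ y) ≤ β * (a * (V x + V y) + 2 * b) :=
    mul_le_mul_of_nonneg_left (by linarith [hκ.drift x, hκ.drift y]) hβ
  have slack_nonneg : 0 ≤ (γ - a) * β := mul_nonneg (sub_nonneg.2 haγ) hβ
  have hVx := hκ.lyapunov_nonneg x
  have hVy := hκ.lyapunov_nonneg y
  rw [mul_assoc]
  obtain far | near := le_total R (V x + V y)
  · refine (bound (Measure.zero_le _) (Measure.zero_le _)).trans ?_
    rw [integral_zero_measure, mul_zero, sub_zero, ← mul_add]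
    refine mul_le_mul_of_nonneg_left ?_ hc
    linarith [mul_le_mul_of_nonneg_left far slack_nonneg]
  · have hνx := hκ.minorization x (by linarith)
    refine (bound hνx (hκ.minorization y (by linarith))).trans ?_
    rw [hV ν ((hκ.integrable x).mono_measure hνx), ← mul_add, mul_left_comm, ← mul_sub]
    refine mul_le_mul_of_nonneg_left ?_ hc
    have hVν := mul_nonneg hβ (integral_nonneg (μ := ν) hκ.lyapunov_nonneg)
    linarith [mul_nonneg slack_nonneg (add_nonneg hVx hVy)]

lemma exists_contraction_parameters {a b R α : ℝ} (ha0 : 0 ≤ a) (ha1 : a < 1) (hb : 0 ≤ b)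
    (hR : 2 * b < (1 - a) * R) (hα : 0 < α) :
    ∃ β γ : ℝ, 0 < β ∧ 0 < γ ∧ γ < 1 ∧ a ≤ γ ∧
      2 * (1 - γ) + 2 * β * b ≤ (γ - a) * β * R ∧ 1 - α + β * b ≤ γ := by
  have hR0 : 0 < R := pos_of_mul_pos_right (by linarith) (sub_pos.2 ha1).le
  have hβ : 0 < α / (2 * (b + 1)) := by positivity
  set β := α / (2 * (b + 1)) with hβ_def
  have hβb : β * b ≤ α / 2 := by
    rw [hβ_def, div_mul_eq_mul_div, div_le_div_iff₀ (by positivity) two_pos]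
    nlinarith
  have hden : 0 < 2 + β * R := by positivity
  obtain ⟨δ, hδ0, hδ⟩ : ∃ δ : ℝ, 0 < δ ∧
      δ < min (α / 2) (min (β * ((1 - a) * R - 2 * b) / (2 + β * R)) (1 - a)) :=
    exists_between (lt_min (by positivity) (lt_min
      (div_pos (mul_pos hβ (sub_pos.2 hR)) hden) (sub_pos.2 ha1)))
  obtain ⟨hδα, hδR, hδa⟩ : _ ∧ _ ∧ _ := by simpa only [lt_min_iff] using hδ
  rw [lt_div_iff₀ hden] at hδR
  exact ⟨β, 1 - δ, hβ, by linarith, by linarith, by linarith, by linarith, by linarith⟩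

lemma HarrisCondition.hasWeightedOscLE_pow {κ : Kernel X X} [IsMarkovKernel κ] {V : X → ℝ}
    {ν : Measure X} [IsFiniteMeasure ν] {a b R β γ : ℝ} (hκ : HarrisCondition κ V ν a b R)
    (hβ : 0 ≤ β) (hγ : 0 ≤ γ) (haγ : a ≤ γ) (hfar : 2 * (1 - γ) + 2 * β * b ≤ (γ - a) * β * R)
    (hnear : 1 - ν.real Set.univ + β * b ≤ γ) {A : Set X} (hA : MeasurableSet A) (n : ℕ) :
    HasWeightedOscLE V β (γ ^ n) fun x => ((κ ^ n) x).real A := by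
  induction n with
  | zero =>
    intro x y
    have hV := mul_nonneg hβ (add_nonneg (hκ.lyapunov_nonneg x) (hκ.lyapunov_nonneg y))
    rw [pow_zero γ, one_mul]
    exact (abs_sub_le_of_nonneg_of_le measureReal_nonneg measureReal_le_one
      measureReal_nonneg measureReal_le_one).trans (by linarith)
  | succ n ih =>
    simp only [pow_succ_kernel_apply', measureReal_bind _ (κ ^ n) hA, pow_succ γ]
    exact hκ.hasWeightedOscLE_integral hβ haγ hfar hnear (pow_nonneg hγ n)
      ((κ ^ n).measurable_coe hA).ennreal_toReal ih

lemma HarrisCondition.tvDist_pow_le {κ : Kernel X X} [IsMarkovKernel κ] {V : X → ℝ}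
    {ν : Measure X} [IsFiniteMeasure ν] {a b R β γ : ℝ} (hκ : HarrisCondition κ V ν a b R)
    (hβ : 0 ≤ β) (hγ : 0 ≤ γ) (haγ : a ≤ γ) (hfar : 2 * (1 - γ) + 2 * β * b ≤ (γ - a) * β * R)
    (hnear : 1 - ν.real Set.univ + β * b ≤ γ) (n : ℕ) (x y : X) :
    tvDist ((κ ^ n) x) ((κ ^ n) y) ≤ γ ^ n * (2 + β * (V x + V y)) :=
  tvDist_le_of_forall_measurableSet fun _ hA =>
    hκ.hasWeightedOscLE_pow hβ hγ haγ hfar hnear hA n x y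

-- `κⁿ⁺¹(x, ·)` is the average of `κⁿ(y, ·)` over `y ∼ κ(x, ·)`.
lemma tvDist_pow_pow_succ_le {κ : Kernel X X} [IsMarkovKernel κ] {V : X → ℝ} {a b β γ : ℝ}
    (hV : ∀ x, Integrable V (κ x)) (drift : ∀ x, ∫ z, V z ∂κ x ≤ a * V x + b) (hβ : 0 ≤ β)
    (hγ : 0 ≤ γ) {n : ℕ}
    (h : ∀ x y, tvDist ((κ ^ n) x) ((κ ^ n) y) ≤ γ ^ n * (2 + β * (V x + V y))) (x : X) :
    tvDist ((κ ^ n) x) ((κ ^ (n + 1)) x) ≤ (2 + β * (V x + (a * V x + b))) * γ ^ n := by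
  have weight_integrable : Integrable (fun y => V x + V y) (κ x) := (integrable_const _).add (hV x)
  calc tvDist ((κ ^ n) x) ((κ ^ (n + 1)) x)
      = tvDist ((κ x).bind (Kernel.const X ((κ ^ n) x))) ((κ x).bind ⇑(κ ^ n)) := by
        rw [pow_succ_kernel_apply', Measure.const_comp, measure_univ, one_smul]
    _ ≤ ∫ y, γ ^ n * (2 + β * (V x + V y)) ∂κ x :=
        tvDist_bind_bind_le_integral (κ x) _ _
          (((integrable_const 2).add (weight_integrable.const_mul β)).const_mul (γ ^ n)) (h x)
    _ = γ ^ n * (2 + β * (V x + ∫ y, V y ∂κ x)) := by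
        rw [integral_const_mul, integral_add (integrable_const 2) (weight_integrable.const_mul β),
          integral_const_mul, integral_add (integrable_const _) (hV x)]
        simp
    _ ≤ (2 + β * (V x + (a * V x + b))) * γ ^ n := by
        rw [mul_comm]
        gcongr
        exact drift x

lemma exists_isGeometricallyErgodic_of_tvDist_pow_le {κ : Kernel X X} [IsMarkovKernel κ]
    {V : X → ℝ} {a b β γ : ℝ} (hV : ∀ x, Integrable V (κ x))
    (drift : ∀ x, ∫ z, V z ∂κ x ≤ a * V x + b) (hβ : 0 ≤ β) (hγ0 : 0 ≤ γ) (hγ1 : γ < 1)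
    (h : ∀ n x y, tvDist ((κ ^ n) x) ((κ ^ n) y) ≤ γ ^ n * (2 + β * (V x + V y))) (x₀ : X) :
    ∃ π, IsGeometricallyErgodic κ π γ fun x =>
      2 + β * (V x + V x₀) + (2 + β * (V x₀ + (a * V x₀ + b))) / (1 - γ) := by
  obtain ⟨π, hπ, hπ_le⟩ := exists_tvDist_le_of_le_geometric hγ0 hγ1
    fun n => tvDist_pow_pow_succ_le hV drift hβ hγ0 (h n) x₀
  refine ⟨π, hπ, ?_, fun x n => ?_⟩
  · refine invariant_of_tendsto_tvDist_pow (x := x₀) (squeeze_zero (fun n => tvDist_nonneg _ _)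
      hπ_le ?_)
    simpa using ((tendsto_pow_atTop_nhds_zero_of_lt_one hγ0 hγ1).const_mul
      (2 + β * (V x₀ + (a * V x₀ + b)))).div_const (1 - γ)
  · calc tvDist ((κ ^ n) x) π
        ≤ tvDist ((κ ^ n) x) ((κ ^ n) x₀) + tvDist ((κ ^ n) x₀) π := tvDist_triangle _ _ _
      _ ≤ γ ^ n * (2 + β * (V x + V x₀)) + (2 + β * (V x₀ + (a * V x₀ + b))) * γ ^ n / (1 - γ) :=
          add_le_add (h n x x₀) (hπ_le n)
      _ = _ := by ring

theorem exists_isGeometricallyErgodic_of_harrisCondition [Nonempty X] (V : X → ℝ) (ν : Measure X)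
    [IsFiniteMeasure ν] [NeZero ν] {a b R : ℝ} (ha0 : 0 ≤ a) (ha1 : a < 1) (hb : 0 ≤ b)
    (hR : 2 * b < (1 - a) * R) :
    ∃ (ρ : ℝ) (C : X → ℝ), 0 < ρ ∧ ρ < 1 ∧ ∀ (κ : Kernel X X) [IsMarkovKernel κ],
      HarrisCondition κ V ν a b R → ∃ π, IsGeometricallyErgodic κ π ρ C := by
  obtain ⟨β, γ, hβ, hγ0, hγ1, haγ, hfar, hnear⟩ := exists_contraction_parameters ha0 ha1 hb hR
    (measureReal_univ_pos (μ := ν))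
  exact ⟨γ, _, hγ0, hγ1, fun κ _ hκ => exists_isGeometricallyErgodic_of_tvDist_pow_le
    hκ.integrable hκ.drift hβ.le hγ0.le hγ1 (hκ.tvDist_pow_le hβ.le hγ0.le haγ hfar hnear)
    (Classical.arbitrary X)⟩

end Harris

section Gaussian

variable {v : NNReal}

lemma integral_gaussianReal_eq_integral_add (m : ℝ) (f : ℝ → ℝ) :
    ∫ x, f x ∂gaussianReal m v = ∫ z, f (z + m) ∂gaussianReal 0 v := by
  have map_eq : (gaussianReal 0 v).map (· + m) = gaussianReal m v := by
    rw [gaussianReal_map_add_const, zero_add]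
  rw [← map_eq]
  exact (MeasurableEquiv.addRight m).measurableEmbedding.integral_map f

lemma integrable_abs_gaussianReal (m : ℝ) : Integrable (fun x => |x|) (gaussianReal m v) :=
  ((memLp_id_gaussianReal 1).integrable le_rfl).abs

/-- The first absolute moment of the centred Gaussian of variance `v`. -/
noncomputable def gaussianAbsMoment (v : NNReal) : ℝ :=
  ∫ z, |z| ∂gaussianReal 0 v

lemma gaussianAbsMoment_nonneg : 0 ≤ gaussianAbsMoment v :=
  integral_nonneg fun _ => abs_nonneg _

lemma integral_abs_gaussianReal_le (m : ℝ) :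
    ∫ x, |x| ∂gaussianReal m v ≤ |m| + gaussianAbsMoment v := by
  have translate_integrable : Integrable (fun z => |z + m|) (gaussianReal 0 v) :=
    (((memLp_id_gaussianReal 1).integrable le_rfl).add (integrable_const m)).abs
  calc ∫ x, |x| ∂gaussianReal m v
      = ∫ z, |z + m| ∂gaussianReal 0 v := integral_gaussianReal_eq_integral_add m _
    _ ≤ ∫ z, (|z| + |m|) ∂gaussianReal 0 v :=
        integral_mono translate_integrable
          ((integrable_abs_gaussianReal 0).add (integrable_const _)) fun z => abs_add_le z m
    _ = |m| + gaussianAbsMoment v := by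
        rw [integral_add (integrable_abs_gaussianReal 0) (integrable_const _), add_comm]
        simp [gaussianAbsMoment]

lemma measureReal_gaussianReal (m : ℝ) (hv : v ≠ 0) (A : Set ℝ) :
    (gaussianReal m v).real A = ∫ x in A, gaussianPDFReal m v x := by
  rw [Measure.real, gaussianReal_apply_eq_integral m hv,
    ENNReal.toReal_ofReal (integral_nonneg (gaussianPDFReal_nonneg m v))]

-- The ratio of the densities is `exp (-t)` with `t` affine in `x`, and `1 - exp (-t) ≤ t`.
lemma gaussianPDFReal_sub_le (m₁ m₂ : ℝ) (hv : v ≠ 0) (x : ℝ) :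
    gaussianPDFReal m₁ v x - gaussianPDFReal m₂ v x ≤
      gaussianPDFReal m₁ v x * (|m₁ - m₂| * (2 * |x - m₁| + |m₁ - m₂|) / (2 * v)) := by
  set t := (m₁ - m₂) * (2 * (x - m₁) + (m₁ - m₂)) / (2 * v) with ht
  have ratio : gaussianPDFReal m₂ v x = gaussianPDFReal m₁ v x * Real.exp (-t) := by
    rw [gaussianPDFReal, gaussianPDFReal, mul_assoc _ _ (Real.exp (-t)), ← Real.exp_add, ht]
    congr 2
    field_simp
    ring
  have t_le : t ≤ |m₁ - m₂| * (2 * |x - m₁| + |m₁ - m₂|) / (2 * v) := by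
    refine div_le_div_of_nonneg_right ((le_abs_self _).trans ?_) (by positivity)
    rw [abs_mul]
    gcongr
    exact (abs_add_le _ _).trans_eq (by rw [abs_mul, abs_two])
  calc gaussianPDFReal m₁ v x - gaussianPDFReal m₂ v x
      = gaussianPDFReal m₁ v x * (1 - Real.exp (-t)) := by rw [ratio]; ring
    _ ≤ _ := mul_le_mul_of_nonneg_left
        (by linarith [Real.add_one_le_exp (-t)]) (gaussianPDFReal_nonneg m₁ v x)

lemma measureReal_gaussianReal_sub_le (m m' : ℝ) (hv : v ≠ 0) (A : Set ℝ) :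
    (gaussianReal m v).real A - (gaussianReal m' v).real A ≤
      |m - m'| * (2 * gaussianAbsMoment v + |m - m'|) / (2 * v) := by
  set g : ℝ → ℝ := fun x => |m - m'| * (2 * |x - m| + |m - m'|) / (2 * v)
  have g_integrable : Integrable g (gaussianReal m v) :=
    (((((((memLp_id_gaussianReal 1).integrable le_rfl).sub (integrable_const m)).abs).const_mul
      2).add (integrable_const _)).const_mul _).div_const _
  have pdf_mul_g_integrable : Integrable fun x => gaussianPDFReal m v x * g x := by
    rw [gaussianReal_of_var_ne_zero m hv, integrable_withDensity_iff_integrable_smul'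
      (measurable_gaussianPDF m v) (.of_forall fun _ => gaussianPDF_lt_top)] at g_integrable
    simpa only [toReal_gaussianPDF, smul_eq_mul] using g_integrable
  calc (gaussianReal m v).real A - (gaussianReal m' v).real A
      = ∫ x in A, (gaussianPDFReal m v x - gaussianPDFReal m' v x) := by
        rw [measureReal_gaussianReal m hv, measureReal_gaussianReal m' hv,
          integral_sub (integrable_gaussianPDFReal m v).restrict
            (integrable_gaussianPDFReal m' v).restrict]
    _ ≤ ∫ x in A, gaussianPDFReal m v x * g x :=
        integral_mono ((integrable_gaussianPDFReal m v).sub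
          (integrable_gaussianPDFReal m' v)).restrict pdf_mul_g_integrable.restrict
          (gaussianPDFReal_sub_le m m' hv)
    _ ≤ ∫ x, gaussianPDFReal m v x * g x :=
        setIntegral_le_integral pdf_mul_g_integrable (.of_forall fun x =>
          mul_nonneg (gaussianPDFReal_nonneg m v x) (by positivity))
    _ = ∫ z, |m - m'| * (2 * |z| + |m - m'|) / (2 * v) ∂gaussianReal 0 v := by
        simp only [← smul_eq_mul (a := gaussianPDFReal m v _)]
        rw [← integral_gaussianReal_eq_integral_smul hv, integral_gaussianReal_eq_integral_add]
        simp only [g, add_sub_cancel_right]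
    _ = _ := by
        rw [integral_div, integral_const_mul, integral_add
          ((integrable_abs_gaussianReal 0).const_mul 2) (integrable_const _), integral_const_mul]
        simp [gaussianAbsMoment]

lemma tvDist_gaussianReal_le (m m' : ℝ) (hv : v ≠ 0) :
    tvDist (gaussianReal m v) (gaussianReal m' v) ≤
      |m - m'| * (2 * gaussianAbsMoment v + |m - m'|) / (2 * v) := by
  refine tvDist_le_of_forall_measurableSet fun A _ =>
    abs_sub_le_iff.2 ⟨measureReal_gaussianReal_sub_le m m' hv A, ?_⟩
  simpa only [abs_sub_comm] using measureReal_gaussianReal_sub_le m' m hv A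

lemma tvDist_gaussianReal_le_of_abs_sub_le {m m' K : ℝ} (hv : v ≠ 0) (h : |m - m'| ≤ 2 * K) :
    tvDist (gaussianReal m v) (gaussianReal m' v) ≤
      (gaussianAbsMoment v + K) / v * |m - m'| :=
  calc tvDist (gaussianReal m v) (gaussianReal m' v)
      ≤ |m - m'| * (2 * gaussianAbsMoment v + |m - m'|) / (2 * v) := tvDist_gaussianReal_le m m' hv
    _ ≤ |m - m'| * (2 * gaussianAbsMoment v + 2 * K) / (2 * v) := by gcongr
    _ = (gaussianAbsMoment v + K) / v * |m - m'| := by field_simp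

lemma gaussianPDF_zero_le_of_abs_sub_le {m x K : ℝ} (h : |x - m| ≤ K) :
    gaussianPDF 0 v K ≤ gaussianPDF m v x := by
  refine ENNReal.ofReal_le_ofReal ?_
  rw [gaussianPDFReal, gaussianPDFReal, sub_zero]
  gcongr _ * Real.exp (-?_ / _)
  exact sq_le_sq.2 (h.trans (le_abs_self K))

/-- A common minorant of all Gaussians of variance `v` whose mean is at most `M` in absolute value:
on `[0, 1]` their densities are at least that of the centred Gaussian at `1 + M`. -/
noncomputable def gaussianMinorant (v : NNReal) (M : ℝ) : Measure ℝ :=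
  gaussianPDF 0 v (1 + M) • volume.restrict (Set.Icc 0 1)

instance isFiniteMeasure_gaussianMinorant (M : ℝ) : IsFiniteMeasure (gaussianMinorant v M) :=
  Measure.smul_finite _ gaussianPDF_ne_top

lemma neZero_gaussianMinorant (hv : v ≠ 0) (M : ℝ) : NeZero (gaussianMinorant v M) := by
  refine ⟨fun h => ?_⟩
  have mass : gaussianMinorant v M Set.univ = gaussianPDF 0 v (1 + M) := by
    simp [gaussianMinorant]
  exact (gaussianPDF_pos 0 hv (1 + M)).ne' (by rw [← mass, h, Measure.coe_zero, Pi.zero_apply])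

lemma gaussianMinorant_le {m M : ℝ} (hv : v ≠ 0) (hm : |m| ≤ M) :
    gaussianMinorant v M ≤ gaussianReal m v := by
  have density_le : ∀ x ∈ Set.Icc (0 : ℝ) 1, gaussianPDF 0 v (1 + M) ≤ gaussianPDF m v x :=
    fun x hx => gaussianPDF_zero_le_of_abs_sub_le <|
      (abs_sub x m).trans (add_le_add (abs_le.2 ⟨by linarith [hx.1], hx.2⟩) hm)
  calc gaussianMinorant v M
      ≤ (volume.restrict (Set.Icc 0 1)).withDensity (gaussianPDF m v) := by
        rw [gaussianMinorant, ← withDensity_const]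
        exact withDensity_mono (ae_restrict_of_forall_mem measurableSet_Icc density_le)
    _ = (gaussianReal m v).restrict (Set.Icc 0 1) := by
        rw [gaussianReal_of_var_ne_zero m hv, restrict_withDensity measurableSet_Icc]
    _ ≤ gaussianReal m v := Measure.restrict_le_self

/-- The transition kernel `x ↦ N(m x, v)`. -/
noncomputable def gaussianKernel {X : Type*} [MeasurableSpace X] (m : X → ℝ) (hm : Measurable m)
    (v : NNReal) : Kernel X ℝ where
  toFun x := gaussianReal (m x) v
  measurable' := measurable_gaussianReal.comp (hm.prodMk measurable_const)

instance isMarkovKernel_gaussianKernel {X : Type*} [MeasurableSpace X] (m : X → ℝ)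
    (hm : Measurable m) : IsMarkovKernel (gaussianKernel m hm v) :=
  ⟨fun x => inferInstanceAs (IsProbabilityMeasure (gaussianReal (m x) v))⟩

lemma harrisCondition_gaussianKernel {m : ℝ → ℝ} (hm : Measurable m) (hv : v ≠ 0) {a c : ℝ}
    (ha : 0 ≤ a) (hmac : ∀ x, |m x| ≤ a * |x| + c) (R : ℝ) :
    HarrisCondition (gaussianKernel m hm v) (|·|) (gaussianMinorant v (a * R + c)) a
      (c + gaussianAbsMoment v) R where
  lyapunov_nonneg := abs_nonneg
  integrable x := integrable_abs_gaussianReal (m x)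
  drift x := (integral_abs_gaussianReal_le (m x)).trans (by linarith [hmac x])
  minorization x hx := gaussianMinorant_le hv <|
    (hmac x).trans (add_le_add_left (mul_le_mul_of_nonneg_left hx ha) c)

end Gaussian

section Mixture

variable {ι X Z : Type*} [Fintype ι] [MeasurableSpace X] [MeasurableSpace Z]

/-- The mixture of the measures `μ i` with weights `w i`, which are meant to be nonnegative:
negative weights are replaced by `0`. -/
noncomputable def mixture (w : ι → ℝ) (μ : ι → Measure X) : Measure X :=
  ∑ i, ENNReal.ofReal (w i) • μ i

variable {w : ι → ℝ} {μ : ι → Measure X}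

lemma sum_ofReal_eq_one (hw : w ∈ stdSimplex ℝ ι) : ∑ i, ENNReal.ofReal (w i) = 1 := by
  rw [← ENNReal.ofReal_sum_of_nonneg fun i _ => hw.1 i, hw.2, ENNReal.ofReal_one]

lemma isProbabilityMeasure_mixture [∀ i, IsProbabilityMeasure (μ i)] (hw : w ∈ stdSimplex ℝ ι) :
    IsProbabilityMeasure (mixture w μ) :=
  ⟨by simp [mixture, sum_ofReal_eq_one hw]⟩

lemma le_mixture {ξ : Measure X} (hw : w ∈ stdSimplex ℝ ι) (h : ∀ i, ξ ≤ μ i) :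
    ξ ≤ mixture w μ :=
  calc ξ = ∑ i, ENNReal.ofReal (w i) • ξ := by
        rw [← Finset.sum_smul, sum_ofReal_eq_one hw, one_smul]
    _ ≤ mixture w μ := Finset.sum_le_sum fun i _ => by gcongr; exact h i

lemma integrable_mixture {f : X → ℝ} (hf : ∀ i, Integrable f (μ i)) :
    Integrable f (mixture w μ) :=
  integrable_finsetSum_measure.2 fun i _ => (hf i).smul_measure ENNReal.ofReal_ne_top

lemma integral_mixture {f : X → ℝ} (hw : ∀ i, 0 ≤ w i) (hf : ∀ i, Integrable f (μ i)) :
    ∫ x, f x ∂mixture w μ = ∑ i, w i * ∫ x, f x ∂μ i := by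
  rw [mixture, integral_finsetSum_measure
    fun i _ => (hf i).smul_measure ENNReal.ofReal_ne_top]
  exact Finset.sum_congr rfl fun i _ => by
    rw [integral_smul_measure, ENNReal.toReal_ofReal (hw i), smul_eq_mul]

lemma measureReal_mixture [∀ i, IsFiniteMeasure (μ i)] (hw : ∀ i, 0 ≤ w i) (A : Set X) :
    (mixture w μ).real A = ∑ i, w i * (μ i).real A := by
  simp only [mixture, Measure.real, Measure.finsetSum_apply, Measure.smul_apply, smul_eq_mul]
  rw [ENNReal.toReal_sum fun i _ => ENNReal.mul_ne_top ENNReal.ofReal_ne_top (measure_ne_top _ _)]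
  exact Finset.sum_congr rfl fun i _ => by rw [ENNReal.toReal_mul, ENNReal.toReal_ofReal (hw i)]

lemma tvDist_mixture_le (ν : Measure X) [IsProbabilityMeasure ν] [∀ i, IsProbabilityMeasure (μ i)]
    (hw : w ∈ stdSimplex ℝ ι) : tvDist ν (mixture w μ) ≤ ∑ i, w i * tvDist ν (μ i) := by
  refine tvDist_le_of_forall_measurableSet fun A _ => ?_
  calc |ν.real A - (mixture w μ).real A|
      = |∑ i, w i * (ν.real A - (μ i).real A)| := by
        simp only [measureReal_mixture hw.1, mul_sub, Finset.sum_sub_distrib, ← Finset.sum_mul,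
          hw.2, one_mul]
    _ ≤ ∑ i, w i * tvDist ν (μ i) := by
        refine (Finset.abs_sum_le_sum_abs _ _).trans (Finset.sum_le_sum fun i _ => ?_)
        rw [abs_mul, abs_of_nonneg (hw.1 i)]
        exact mul_le_mul_of_nonneg_left (abs_measureReal_sub_le_tvDist ν (μ i) A) (hw.1 i)

/-- The kernel which, at `x`, picks `i` with probability `w x i` and then moves according to
`κ i`. -/
noncomputable def mixtureKernel (w : X → ι → ℝ) (hw : Measurable w) (κ : ι → Kernel X Z) :
    Kernel X Z where
  toFun x := mixture (w x) fun i => κ i x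
  measurable' := by
    refine Measure.measurable_of_measurable_coe _ fun A hA => ?_
    simp only [mixture, Measure.finsetSum_apply, Measure.smul_apply, smul_eq_mul]
    exact Finset.measurable_sum _ fun i _ =>
      ((measurable_pi_apply i).comp hw).ennreal_ofReal.mul ((κ i).measurable_coe hA)

lemma isMarkovKernel_mixtureKernel {w : X → ι → ℝ} (hw : Measurable w)
    (hw_mem : ∀ x, w x ∈ stdSimplex ℝ ι) (κ : ι → Kernel X Z) [∀ i, IsMarkovKernel (κ i)] :
    IsMarkovKernel (mixtureKernel w hw κ) :=
  ⟨fun x => isProbabilityMeasure_mixture (hw_mem x)⟩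

lemma harrisCondition_mixtureKernel [Nonempty ι] {w : X → ι → ℝ} (hw : Measurable w)
    (hw_mem : ∀ x, w x ∈ stdSimplex ℝ ι) {κ : ι → Kernel X X} {V : X → ℝ} {ν : Measure X}
    {a b R : ℝ} (h : ∀ i, HarrisCondition (κ i) V ν a b R) :
    HarrisCondition (mixtureKernel w hw κ) V ν a b R where
  lyapunov_nonneg := (h (Classical.arbitrary ι)).lyapunov_nonneg
  integrable x := integrable_mixture fun i => (h i).integrable x
  drift x :=
    calc ∫ z, V z ∂mixture (w x) (fun i => κ i x)
        = ∑ i, w x i * ∫ z, V z ∂κ i x := integral_mixture (hw_mem x).1 fun i => (h i).integrable x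
      _ ≤ ∑ i, w x i * (a * V x + b) := Finset.sum_le_sum fun i _ =>
          mul_le_mul_of_nonneg_left ((h i).drift x) ((hw_mem x).1 i)
      _ = a * V x + b := by rw [← Finset.sum_mul, (hw_mem x).2, one_mul]
  minorization x hx := le_mixture (hw_mem x) fun i => (h i).minorization x hx

end Mixture

section Sampling

variable {Y : Type*} [Fintype Y] {f : Y → ℝ}

lemma prod_mem_stdSimplex (hf : f ∈ stdSimplex ℝ Y) (N : ℕ) :
    (fun ys : Fin N → Y => ∏ i, f (ys i)) ∈ stdSimplex ℝ (Fin N → Y) := by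
  classical
  refine ⟨fun ys => Finset.prod_nonneg fun i _ => hf.1 (ys i), ?_⟩
  have expand := Finset.prod_univ_sum (fun _ : Fin N => (Finset.univ : Finset Y)) fun _ y => f y
  rw [Fintype.piFinset_univ] at expand
  rw [← expand, hf.2, Finset.prod_const_one]

lemma sum_prod_mul_sum_sq (hf : f ∈ stdSimplex ℝ Y) {g : Y → ℝ} (hg : ∑ y, f y * g y = 0)
    (N : ℕ) :
    ∑ ys : Fin N → Y, (∏ i, f (ys i)) * (∑ i, g (ys i)) ^ 2 = N * ∑ y, f y * g y ^ 2 := by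
  induction N with
  | zero => simp
  | succ N ih =>
    let E : ((Fin N → Y) → ℝ) → ℝ := fun φ => ∑ ys, (∏ i, f (ys i)) * φ ys
    have expand (y : Y) :
        ∑ ys : Fin N → Y, (f y * ∏ i, f (ys i)) * (g y + ∑ i, g (ys i)) ^ 2 =
          f y * g y ^ 2 + f y * g y * (2 * E fun ys => ∑ i, g (ys i))
            + f y * E fun ys => (∑ i, g (ys i)) ^ 2 := by
      rw [← mul_one (f y * g y ^ 2), ← (prod_mem_stdSimplex hf N).2]
      simp only [E, Finset.mul_sum (s := (Finset.univ : Finset (Fin N → Y))),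
        ← Finset.sum_add_distrib]
      exact Finset.sum_congr rfl fun ys _ => by ring
    rw [← (Fin.consEquiv fun _ => Y).sum_comp, Fintype.sum_prod_type]
    simp only [Fin.consEquiv_apply, Fin.prod_univ_succ, Fin.sum_univ_succ, Fin.cons_zero,
      Fin.cons_succ, expand, Finset.sum_add_distrib, ← Finset.sum_mul, hg, hf.2]
    rw [zero_mul, add_zero, one_mul, show E _ = _ from ih]
    push_cast
    ring

lemma abs_sum_mul_le_norm (hf : f ∈ stdSimplex ℝ Y) (t : Y → ℝ) : |∑ y, f y * t y| ≤ ‖t‖ :=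
  calc |∑ y, f y * t y| ≤ ∑ y, f y * ‖t‖ := by
        refine (Finset.abs_sum_le_sum_abs _ _).trans (Finset.sum_le_sum fun y _ => ?_)
        rw [abs_mul, abs_of_nonneg (hf.1 y)]
        exact mul_le_mul_of_nonneg_left (norm_le_pi_norm t y) (hf.1 y)
    _ = ‖t‖ := by rw [← Finset.sum_mul, hf.2, one_mul]

lemma abs_sum_div_le_norm (t : Y → ℝ) {N : ℕ} (ys : Fin N → Y) :
    |(∑ i, t (ys i)) / N| ≤ ‖t‖ := by
  rw [abs_div, Nat.abs_cast]
  refine div_le_of_le_mul₀ (Nat.cast_nonneg N) (norm_nonneg t) ?_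
  calc |∑ i, t (ys i)| ≤ ∑ i, |t (ys i)| := Finset.abs_sum_le_sum_abs _ _
    _ ≤ ∑ _ : Fin N, ‖t‖ := Finset.sum_le_sum fun i _ => norm_le_pi_norm t (ys i)
    _ = ‖t‖ * N := by simp [mul_comm]

lemma sum_mul_sq_mean_sub_le (hf : f ∈ stdSimplex ℝ Y) (t : Y → ℝ) :
    ∑ y, f y * ((∑ y', f y' * t y') - t y) ^ 2 ≤ ‖t‖ ^ 2 := by
  set e := ∑ y', f y' * t y' with he
  calc ∑ y, f y * (e - t y) ^ 2
      = ∑ y, f y * t y ^ 2 - e ^ 2 := by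
        have expand (y : Y) :
            f y * (e - t y) ^ 2 = f y * t y ^ 2 + f y * e ^ 2 - f y * t y * (2 * e) := by ring
        simp only [expand, Finset.sum_sub_distrib, Finset.sum_add_distrib, ← Finset.sum_mul, hf.2,
          ← he]
        ring
    _ ≤ ∑ y, f y * ‖t‖ ^ 2 := by
        refine (sub_le_self _ (sq_nonneg e)).trans (Finset.sum_le_sum fun y _ => ?_)
        exact mul_le_mul_of_nonneg_left
          (sq_le_sq.2 ((norm_le_pi_norm t y).trans (le_abs_self _))) (hf.1 y)
    _ = ‖t‖ ^ 2 := by rw [← Finset.sum_mul, hf.2, one_mul]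

-- The second moment of the sampling error is its variance, which is of order `1 / N`.
lemma sum_prod_mul_abs_mean_sub_le (hf : f ∈ stdSimplex ℝ Y) (t : Y → ℝ) {N : ℕ} (hN : N ≠ 0) :
    ∑ ys : Fin N → Y, (∏ i, f (ys i)) * |(∑ y, f y * t y) - (∑ i, t (ys i)) / N| ≤
      ‖t‖ / √N := by
  set e := ∑ y, f y * t y
  have hw := prod_mem_stdSimplex hf N
  have centered : ∑ y, f y * (e - t y) = 0 := by
    simp only [mul_sub, Finset.sum_sub_distrib, ← Finset.sum_mul, hf.2, one_mul]
    exact sub_self e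
  have error_eq (ys : Fin N → Y) : e - (∑ i, t (ys i)) / N = (∑ i, (e - t (ys i))) / N := by
    rw [Finset.sum_sub_distrib, Finset.sum_const, Finset.card_fin, nsmul_eq_mul, sub_div,
      mul_div_cancel_left₀ e (Nat.cast_ne_zero.2 hN)]
  refine le_of_sq_le_sq ?_ (by positivity)
  calc (∑ ys : Fin N → Y, (∏ i, f (ys i)) * |e - (∑ i, t (ys i)) / N|) ^ 2
      ≤ ∑ ys : Fin N → Y, (∏ i, f (ys i)) * |e - (∑ i, t (ys i)) / N| ^ 2 :=
        Real.pow_arith_mean_le_arith_mean_pow _ _ _ (fun ys _ => hw.1 ys) hw.2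
          (fun _ _ => abs_nonneg _) 2
    _ = (∑ y, f y * (e - t y) ^ 2) / N := by
        simp only [sq_abs, error_eq, div_pow, ← mul_div_assoc, ← Finset.sum_div,
          sum_prod_mul_sum_sq hf centered]
        field_simp
    _ ≤ (‖t‖ / √N) ^ 2 := by
        rw [div_pow, Real.sq_sqrt (Nat.cast_nonneg N)]
        gcongr
        exact sum_mul_sq_mean_sub_le hf t

end Sampling

section SampledDrift

variable {X Y : Type*} [MeasurableSpace X] [Fintype Y]

/-- The kernel `x ↦ N(m x + E t(y), v)`, where `y` has law `p x` on the finite set `Y`. -/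
noncomputable def meanDriftKernel {m : X → ℝ} (hm : Measurable m) {p : X → Y → ℝ}
    (hp : Measurable p) (t : Y → ℝ) (v : NNReal) : Kernel X ℝ :=
  gaussianKernel (fun x => m x + ∑ y, p x y * t y) (by fun_prop) v

/-- The kernel obtained from `meanDriftKernel` by replacing the mean `E t(y)` with the empirical
mean of `t` over `N` independent draws from `p x`, i.e. a mixture of Gaussians over the possible
samples `ys`. -/
noncomputable def sampledDriftKernel {m : X → ℝ} (hm : Measurable m) {p : X → Y → ℝ}
    (hp : Measurable p) (t : Y → ℝ) (v : NNReal) (N : ℕ) : Kernel X ℝ :=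
  mixtureKernel (fun x (ys : Fin N → Y) => ∏ i, p x (ys i)) (by fun_prop) fun ys =>
    gaussianKernel (fun x => m x + (∑ i, t (ys i)) / N) (by fun_prop) v

instance isMarkovKernel_meanDriftKernel {m : X → ℝ} (hm : Measurable m) {p : X → Y → ℝ}
    (hp : Measurable p) (t : Y → ℝ) (v : NNReal) : IsMarkovKernel (meanDriftKernel hm hp t v) :=
  isMarkovKernel_gaussianKernel _ _

lemma isMarkovKernel_sampledDriftKernel {m : X → ℝ} (hm : Measurable m) {p : X → Y → ℝ}
    (hp : Measurable p) (hp_mem : ∀ x, p x ∈ stdSimplex ℝ Y) (t : Y → ℝ) (v : NNReal) (N : ℕ) :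
    IsMarkovKernel (sampledDriftKernel hm hp t v N) :=
  isMarkovKernel_mixtureKernel _ (fun x => prod_mem_stdSimplex (hp_mem x) N) _

lemma tvDist_meanDriftKernel_sampledDriftKernel_le {m : X → ℝ} (hm : Measurable m)
    {p : X → Y → ℝ} (hp : Measurable p) (hp_mem : ∀ x, p x ∈ stdSimplex ℝ Y) (t : Y → ℝ)
    {v : NNReal} (hv : v ≠ 0) {N : ℕ} (hN : N ≠ 0) (x : X) :
    tvDist (meanDriftKernel hm hp t v x) (sampledDriftKernel hm hp t v N x) ≤
      ((gaussianAbsMoment v + ‖t‖) / v * ‖t‖) / √N := by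
  have hw := prod_mem_stdSimplex (hp_mem x) N
  set e := ∑ y, p x y * t y
  have component_le (ys : Fin N → Y) :
      tvDist (gaussianReal (m x + e) v) (gaussianReal (m x + (∑ i, t (ys i)) / N) v) ≤
        (gaussianAbsMoment v + ‖t‖) / v * |e - (∑ i, t (ys i)) / N| := by
    have error_le : |e - (∑ i, t (ys i)) / N| ≤ 2 * ‖t‖ := by
      rw [two_mul]
      exact (abs_sub _ _).trans
        (add_le_add (abs_sum_mul_le_norm (hp_mem x) t) (abs_sum_div_le_norm t ys))
    rw [← add_sub_add_left_eq_sub e _ (m x)] at error_le ⊢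
    exact tvDist_gaussianReal_le_of_abs_sub_le hv error_le
  calc tvDist (meanDriftKernel hm hp t v x) (sampledDriftKernel hm hp t v N x)
      ≤ ∑ ys : Fin N → Y, (∏ i, p x (ys i)) *
          ((gaussianAbsMoment v + ‖t‖) / v * |e - (∑ i, t (ys i)) / N|) :=
        (tvDist_mixture_le (gaussianReal (m x + e) v) hw).trans (Finset.sum_le_sum fun ys _ =>
          mul_le_mul_of_nonneg_left (component_le ys) (hw.1 ys))
    _ = (gaussianAbsMoment v + ‖t‖) / v *
          ∑ ys : Fin N → Y, (∏ i, p x (ys i)) * |e - (∑ i, t (ys i)) / N| := by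
        simp only [Finset.mul_sum, mul_left_comm]
    _ ≤ (gaussianAbsMoment v + ‖t‖) / v * (‖t‖ / √N) :=
        mul_le_mul_of_nonneg_left (sum_prod_mul_abs_mean_sub_le (hp_mem x) t hN)
          (div_nonneg (add_nonneg gaussianAbsMoment_nonneg (norm_nonneg t)) v.2)
    _ = _ := (mul_div_assoc _ _ _).symm

lemma harrisCondition_meanDriftKernel {m : ℝ → ℝ} (hm : Measurable m) {p : ℝ → Y → ℝ}
    (hp : Measurable p) (hp_mem : ∀ x, p x ∈ stdSimplex ℝ Y) (t : Y → ℝ) {v : NNReal}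
    (hv : v ≠ 0) {a c : ℝ} (ha : 0 ≤ a) (hmac : ∀ x, |m x| ≤ a * |x| + c) (R : ℝ) :
    HarrisCondition (meanDriftKernel hm hp t v) (|·|) (gaussianMinorant v (a * R + (c + ‖t‖))) a
      (c + ‖t‖ + gaussianAbsMoment v) R :=
  harrisCondition_gaussianKernel _ hv ha (fun x => (abs_add_le _ _).trans
    ((add_le_add (hmac x) (abs_sum_mul_le_norm (hp_mem x) t)).trans_eq (add_assoc _ _ _))) R

lemma harrisCondition_sampledDriftKernel [Nonempty Y] {m : ℝ → ℝ} (hm : Measurable m)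
    {p : ℝ → Y → ℝ} (hp : Measurable p) (hp_mem : ∀ x, p x ∈ stdSimplex ℝ Y) (t : Y → ℝ)
    {v : NNReal} (hv : v ≠ 0) {a c : ℝ} (ha : 0 ≤ a) (hmac : ∀ x, |m x| ≤ a * |x| + c) (R : ℝ)
    (N : ℕ) :
    HarrisCondition (sampledDriftKernel hm hp t v N) (|·|)
      (gaussianMinorant v (a * R + (c + ‖t‖))) a (c + ‖t‖ + gaussianAbsMoment v) R :=
  harrisCondition_mixtureKernel _ (fun x => prod_mem_stdSimplex (hp_mem x) N) fun ys =>
    harrisCondition_gaussianKernel _ hv ha (fun x => (abs_add_le _ _).trans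
      ((add_le_add (hmac x) (abs_sum_div_le_norm t ys)).trans_eq (add_assoc _ _ _))) R

theorem exists_isGeometricallyErgodic_sampledDriftKernel [Nonempty Y] {m : ℝ → ℝ}
    (hm : Measurable m) {p : ℝ → Y → ℝ} (hp : Measurable p)
    (hp_mem : ∀ x, p x ∈ stdSimplex ℝ Y) (t : Y → ℝ) {v : NNReal} (hv : v ≠ 0) {a c : ℝ}
    (ha0 : 0 ≤ a) (ha1 : a < 1) (hmac : ∀ x, |m x| ≤ a * |x| + c) :
    ∃ (ρ : ℝ) (C : ℝ → ℝ) (π : Measure ℝ) (πN : ℕ → Measure ℝ), 0 < ρ ∧ ρ < 1 ∧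
      IsGeometricallyErgodic (meanDriftKernel hm hp t v) π ρ C ∧
      (∀ N, IsGeometricallyErgodic (sampledDriftKernel hm hp t v N) (πN N) ρ C) ∧
      Tendsto (fun N => tvDist π (πN N)) atTop (nhds 0) := by
  have hc : 0 ≤ c := by simpa using (abs_nonneg _).trans (hmac 0)
  have hb : 0 ≤ c + ‖t‖ + gaussianAbsMoment v :=
    add_nonneg (add_nonneg hc (norm_nonneg t)) gaussianAbsMoment_nonneg
  obtain ⟨R, hR⟩ := exists_gt (2 * (c + ‖t‖ + gaussianAbsMoment v) / (1 - a))
  rw [div_lt_iff₀' (sub_pos.2 ha1)] at hR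
  have := neZero_gaussianMinorant hv (a * R + (c + ‖t‖))
  have markov := isMarkovKernel_sampledDriftKernel hm hp hp_mem t v
  obtain ⟨ρ, C, hρ0, hρ1, harris⟩ := exists_isGeometricallyErgodic_of_harrisCondition
    (|·|) (gaussianMinorant v (a * R + (c + ‖t‖))) ha0 ha1 hb hR
  obtain ⟨π, hπ⟩ := harris _ (harrisCondition_meanDriftKernel hm hp hp_mem t hv ha0 hmac R)
  choose πN hπN using fun N =>
    harris _ (harrisCondition_sampledDriftKernel hm hp hp_mem t hv ha0 hmac R N)
  refine ⟨ρ, C, π, πN, hρ0, hρ1, hπ, hπN, hπ.tendsto_tvDist hρ0.le hρ1 (.of_forall hπN)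
    ((eventually_ne_atTop 0).mono fun N hN =>
      tvDist_meanDriftKernel_sampledDriftKernel_le hm hp hp_mem t hv hN) ?_⟩
  exact (Real.tendsto_sqrt_atTop.comp tendsto_natCast_atTop_atTop).const_div_atTop _

end SampledDrift

section Langevin

variable {Y : Type*} [Fintype Y]

lemma gibbsF1_mem_stdSimplex [Nonempty Y] (s : Y → ℝ) (θ : ℝ) : gibbsF1 s θ ∈ stdSimplex ℝ Y := by
  have partition_pos : 0 < ∑ y, Real.exp (θ * s y) :=
    Finset.sum_pos (fun _ _ => Real.exp_pos _) Finset.univ_nonempty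
  refine ⟨fun y => div_nonneg (Real.exp_nonneg _) partition_pos.le, ?_⟩
  simp only [gibbsF1, ← Finset.sum_div]
  exact div_self partition_pos.ne'

lemma measurable_gibbsF1 (s : Y → ℝ) : Measurable (gibbsF1 s) := by
  unfold gibbsF1
  fun_prop

/-- The part of the mean `θ + σ² / 2 * ∇ log π(θ | y)` of a Langevin step that is affine in `θ`, for
the prior `N(0, sp²)` and the observed statistic `u`. The remaining part is the bounded term
`-σ² / 2 * E s(y)`. -/
noncomputable def langevinAffinePart (σ2 sp u θ : ℝ) : ℝ :=
  (1 - σ2 / (2 * sp ^ 2)) * θ + σ2 / 2 * u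

lemma measurable_langevinAffinePart (σ2 sp u : ℝ) : Measurable (langevinAffinePart σ2 sp u) := by
  unfold langevinAffinePart
  fun_prop

lemma abs_langevinAffinePart_le (σ2 sp u θ : ℝ) :
    |langevinAffinePart σ2 sp u θ| ≤ |1 - σ2 / (2 * sp ^ 2)| * |θ| + |σ2 / 2 * u| :=
  (abs_add_le _ _).trans_eq (by rw [abs_mul])

lemma abs_one_sub_div_lt_one {σ2 sp : ℝ} (hpos : 0 < σ2) (hlt : σ2 < 4 * sp ^ 2) :
    |1 - σ2 / (2 * sp ^ 2)| < 1 := by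
  have hsp : 0 < 2 * sp ^ 2 := by linarith
  have ratio_pos : 0 < σ2 / (2 * sp ^ 2) := div_pos hpos hsp
  have ratio_lt : σ2 / (2 * sp ^ 2) < 2 := (div_lt_iff₀ hsp).2 (by linarith)
  exact abs_lt.2 ⟨by linarith, by linarith⟩

lemma meanDriftKernel_gibbsF1_apply (s : Y → ℝ) (sp u : ℝ) (σ2 : NNReal) (θ : ℝ) :
    meanDriftKernel (measurable_langevinAffinePart σ2 sp u) (measurable_gibbsF1 s)
        (fun y => -((σ2 : ℝ) / 2 * s y)) σ2 θ =
      gaussianReal (θ + σ2 / 2 * (-θ / sp ^ 2 + u - ∑ y, gibbsF1 s θ y * s y)) σ2 := by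
  have expectation : ∑ y, gibbsF1 s θ y * -((σ2 : ℝ) / 2 * s y) =
      -(σ2 / 2 * ∑ y, gibbsF1 s θ y * s y) := by
    simp only [mul_neg, Finset.sum_neg_distrib, Finset.mul_sum, mul_left_comm]
  change gaussianReal (_ + ∑ y, gibbsF1 s θ y * -((σ2 : ℝ) / 2 * s y)) σ2 = _
  rw [expectation, langevinAffinePart]
  congr 1
  ring

lemma sampledDriftKernel_gibbsF1_apply (s : Y → ℝ) (sp u : ℝ) (σ2 : NNReal) (N : ℕ) (θ : ℝ) :
    sampledDriftKernel (measurable_langevinAffinePart σ2 sp u) (measurable_gibbsF1 s)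
        (fun y => -((σ2 : ℝ) / 2 * s y)) σ2 N θ =
      ∑ ys : Fin N → Y, ENNReal.ofReal (∏ i, gibbsF1 s θ (ys i)) •
        gaussianReal (θ + σ2 / 2 * (-θ / sp ^ 2 + u - 1 / (N : ℝ) * ∑ i, s (ys i))) σ2 := by
  refine Finset.sum_congr rfl fun ys _ => congrArg (_ • ·) ?_
  change gaussianReal (_ + (∑ i, -((σ2 : ℝ) / 2 * s (ys i))) / N) σ2 = _
  rw [Finset.sum_neg_distrib, ← Finset.mul_sum, langevinAffinePart]
  congr 1
  ring

end Langevin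

theorem stmt18_general {Y : Type*} [Fintype Y] (s : Y → ℝ) (yobs : Y) (sp : ℝ)
    (σ2 : NNReal) (hσ2pos : 0 < (σ2 : ℝ)) (hσ2 : (σ2 : ℝ) < 4 * sp ^ 2)
    (grad : ℝ → ℝ)
    (hgrad : ∀ θ, grad θ = -θ / sp ^ 2 + s yobs - ∑ y, gibbsF1 s θ y * s y)
    (Psig : ℝ → Measure ℝ)
    (hPsig : ∀ θ0, Psig θ0 = gaussianReal (θ0 + (σ2 : ℝ) / 2 * grad θ0) σ2)
    (Phat : ℕ → ℝ → Measure ℝ)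
    (hPhat : ∀ N : ℕ, ∀ θ0 : ℝ, Phat N θ0 =
      ∑ ys : Fin N → Y, ENNReal.ofReal (∏ i, gibbsF1 s θ0 (ys i)) •
        gaussianReal
          (θ0 + (σ2 : ℝ) / 2 *
            (grad θ0 + (∑ y, gibbsF1 s θ0 y * s y) - (1 / (N : ℝ)) * ∑ i, s (ys i)))
          σ2) :
    ∃ pisig : Measure ℝ, IsProbabilityMeasure pisig ∧ pisig.bind Psig = pisig ∧
      (∃ ρ : ℝ, 0 < ρ ∧ ρ < 1 ∧ ∀ θ0 : ℝ, ∃ C : ℝ, ∀ n : ℕ,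
        tvDist (iterK Psig n θ0) pisig ≤ C * ρ ^ n) ∧
      ∃ πN : ℕ → Measure ℝ, ∃ N₁ : ℕ,
        (∀ N ≥ N₁, IsProbabilityMeasure (πN N) ∧ (πN N).bind (Phat N) = πN N ∧
          ∃ ρ' : ℝ, 0 < ρ' ∧ ρ' < 1 ∧ ∀ θ0 : ℝ, ∃ C' : ℝ, ∀ n : ℕ,
            tvDist (iterK (Phat N) n θ0) (πN N) ≤ C' * ρ' ^ n)
        ∧ Tendsto (fun N => tvDist pisig (πN N)) atTop (nhds 0) := by
  have : Nonempty Y := ⟨yobs⟩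
  obtain ⟨ρ, C, π, πN, hρ0, hρ1, hπ, hπN, tendsto_π⟩ :=
    exists_isGeometricallyErgodic_sampledDriftKernel
      (measurable_langevinAffinePart σ2 sp (s yobs)) (measurable_gibbsF1 s)
      (gibbsF1_mem_stdSimplex s) (fun y => -((σ2 : ℝ) / 2 * s y)) (NNReal.coe_pos.1 hσ2pos).ne'
      (abs_nonneg _) (abs_one_sub_div_lt_one hσ2pos hσ2)
      (abs_langevinAffinePart_le σ2 sp (s yobs))
  have Psig_eq : Psig = _ := funext fun θ => by
    rw [hPsig, hgrad, ← meanDriftKernel_gibbsF1_apply]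
  have Phat_eq (N : ℕ) : Phat N = _ := funext fun θ => by
    simp only [hPhat, hgrad, sub_add_cancel]
    exact (sampledDriftKernel_gibbsF1_apply s sp (s yobs) σ2 N θ).symm
  refine ⟨π, hπ.isProbabilityMeasure, Psig_eq ▸ hπ.invariant, ⟨ρ, hρ0, hρ1, fun θ => ⟨C θ, ?_⟩⟩,
    πN, 0, fun N _ => ⟨(hπN N).isProbabilityMeasure, Phat_eq N ▸ (hπN N).invariant, ρ, hρ0, hρ1,
      fun θ => ⟨C θ, ?_⟩⟩, tendsto_π⟩
  · exact Psig_eq ▸ hπ.tvDist_iterK_le θ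
  · exact Phat_eq N ▸ (hπN N).tvDist_iterK_le θ

/-- Convergence of the noisy one-dimensional Langevin chain for a Gibbs random field
posterior with Gaussian prior `θ ∼ N(0,s²)` and step size `Σ < s²`: the discretized
Langevin chain `P_Σ` is geometrically ergodic with limiting distribution `π_Σ`, the
noisy chain `P̂_{Σ,N}` is geometrically ergodic for all large `N` with limiting
distribution `π_{Σ,N}`, and `‖π_Σ − π_{Σ,N}‖ → 0` as `N → ∞`. -/
theorem stmt18 {Y : Type*} [Fintype Y] [Nonempty Y] (s : Y → ℝ) (S : ℝ)
    (hS : ∀ y, |s y| ≤ S) (yobs : Y)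
    (sp : ℝ) (hsp : 0 < sp)
    (σ2 : NNReal) (hσ2pos : 0 < (σ2 : ℝ)) (hσ2 : (σ2 : ℝ) < sp ^ 2)
    (grad : ℝ → ℝ)
    (hgrad : ∀ θ, grad θ = -θ / sp ^ 2 + s yobs - ∑ y, gibbsF1 s θ y * s y)
    (Psig : ℝ → Measure ℝ)
    (hPsig : ∀ θ0, Psig θ0 = gaussianReal (θ0 + (σ2 : ℝ) / 2 * grad θ0) σ2)
    (Phat : ℕ → ℝ → Measure ℝ)
    (hPhat : ∀ N : ℕ, ∀ θ0 : ℝ, Phat N θ0 =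
      ∑ ys : Fin N → Y, ENNReal.ofReal (∏ i, gibbsF1 s θ0 (ys i)) •
        gaussianReal
          (θ0 + (σ2 : ℝ) / 2 *
            (grad θ0 + (∑ y, gibbsF1 s θ0 y * s y) - (1 / (N : ℝ)) * ∑ i, s (ys i)))
          σ2) :
    ∃ pisig : Measure ℝ, IsProbabilityMeasure pisig ∧ pisig.bind Psig = pisig ∧
      (∃ ρ : ℝ, 0 < ρ ∧ ρ < 1 ∧ ∀ θ0 : ℝ, ∃ C : ℝ, ∀ n : ℕ,
        tvDist (iterK Psig n θ0) pisig ≤ C * ρ ^ n) ∧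
      ∃ πN : ℕ → Measure ℝ, ∃ N₁ : ℕ,
        (∀ N ≥ N₁, IsProbabilityMeasure (πN N) ∧ (πN N).bind (Phat N) = πN N ∧
          ∃ ρ' : ℝ, 0 < ρ' ∧ ρ' < 1 ∧ ∀ θ0 : ℝ, ∃ C' : ℝ, ∀ n : ℕ,
            tvDist (iterK (Phat N) n θ0) (πN N) ≤ C' * ρ' ^ n)
        ∧ Tendsto (fun N => tvDist pisig (πN N)) atTop (nhds 0) := by
  exact stmt18_general s yobs sp σ2 hσ2pos (by linarith [sq_nonneg sp]) grad hgrad Psig hPsig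
    Phat hPhat
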